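/- Simon's conjecture is equivalent to the monomial Simon conjecture. That is, the following two statements are equivalent: (Simon) every squarefree monomial ideal I of S = K[x_1,...,x_n], generated in a single degree d with G(I) ⊆ G(I_{n,d}) and having linear quotients, can be extended to the squarefree Veronese ideal I_{n,d} by linear quotients; (monomial Simon) every monomial ideal I of S generated in a single degree d with G(I) ⊆ G(m^d) and having linear quotients can be extended to m^d by linear quotients, where m = (x_1,...,x_n). -/

import Mathlib

open MvPolynomial

noncomputable section

variable (K : Type*) [Field K]

/-- The monomial with exponent vector `m`. -/
def mon {σ : Type*} (m : σ →₀ ℕ) : MvPolynomial σ K := monomial m 1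

/-- The degree of an exponent vector. -/
def mdeg {σ : Type*} (m : σ →₀ ℕ) : ℕ := m.sum fun _ e => e

/-- `U` is the minimal monomial generating set `G(I)` of the monomial ideal `I`. -/
def MinimalGens {σ : Type*} [DecidableEq σ] (I : Ideal (MvPolynomial σ K))
    (U : Finset (σ →₀ ℕ)) : Prop :=
  I = Ideal.span (mon K '' (U : Set (σ →₀ ℕ))) ∧
    ∀ m ∈ U, mon K m ∉ Ideal.span (mon K '' ((U.erase m : Finset (σ →₀ ℕ)) : Set (σ →₀ ℕ)))

/-- An ideal generated by (a subset of the) variables. -/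
def GenByVars {σ : Type*} (J : Ideal (MvPolynomial σ K)) : Prop :=
  ∃ B : Set σ, J = Ideal.span ((fun i => (X i : MvPolynomial σ K)) '' B)

/-- The monomial ideal `I` has linear quotients: its minimal monomial generating set can be
ordered `u_1, …, u_m` so that `(u_1, …, u_{j-1}) : u_j` is generated by variables for
`j = 2, …, m`. -/
def HasLinearQuotients {σ : Type*} [DecidableEq σ] (I : Ideal (MvPolynomial σ K)) : Prop :=
  ∃ L : List (σ →₀ ℕ), L.Nodup ∧ MinimalGens K I L.toFinset ∧
    ∀ (j : ℕ) (hj : j < L.length), 0 < j →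
      GenByVars K ((Ideal.span (mon K '' {m | m ∈ L.take j})).colon
        (Ideal.span {mon K (L.get ⟨j, hj⟩)}))

/-- The monomial ideal `I` can be extended by linear quotients by the set `V` of new
monomial generators (`V = G(J) \ G(I)`): `V` can be ordered `v_1, …, v_r` so that
`(I, v_1, …, v_{j-1}) : v_j` is generated by variables for all `j = 1, …, r`. -/
def ExtendsByLinQuots {σ : Type*} (I : Ideal (MvPolynomial σ K)) (V : Set (σ →₀ ℕ)) : Prop :=
  ∃ L : List (σ →₀ ℕ), L.Nodup ∧ {m | m ∈ L} = V ∧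
    ∀ (j : ℕ) (hj : j < L.length),
      GenByVars K ((I ⊔ Ideal.span (mon K '' {m | m ∈ L.take j})).colon
        (Ideal.span {mon K (L.get ⟨j, hj⟩)}))

/-! ### Combinatorial reformulation -/

/-- Combinatorial version of: `(A) : v` is generated by variables. -/
def Good {σ : Type*} (A : Set (σ →₀ ℕ)) (v : σ →₀ ℕ) : Prop :=
  ∀ u ∈ A, ∃ w ∈ A, ∃ l, v l < u l ∧ w ≤ v + Finsupp.single l 1

/-- Successively adding the elements of the list to `A` gives linear quotients. -/
def LChain {σ : Type*} : Set (σ →₀ ℕ) → List (σ →₀ ℕ) → Prop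
  | _, [] => True
  | A, v :: L => Good A v ∧ LChain (A ∪ {v}) L

lemma mem_span_mon {σ : Type*} (A : Set (σ →₀ ℕ)) (f : MvPolynomial σ K) :
    f ∈ Ideal.span (mon K '' A) ↔ ∀ m ∈ f.support, ∃ u ∈ A, u ≤ m :=
  mem_ideal_span_monomial_image

lemma mon_mem_span {σ : Type*} (A : Set (σ →₀ ℕ)) (v : σ →₀ ℕ) :
    mon K v ∈ Ideal.span (mon K '' A) ↔ ∃ u ∈ A, u ≤ v := by
  classical
  rw [mem_span_mon]
  simp [mon, support_monomial]

lemma mem_colon_mon {σ : Type*} (A : Set (σ →₀ ℕ)) (v : σ →₀ ℕ) (f : MvPolynomial σ K) :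
    f ∈ (Ideal.span (mon K '' A)).colon (Ideal.span {mon K v}) ↔
      ∀ m ∈ f.support, ∃ u ∈ A, u ≤ m + v := by
  rw [Ideal.mem_colon_span_singleton, mem_span_mon]
  simp only [mon, mem_support_iff]
  constructor
  · intro h m hm
    exact h (m + v) (by rw [coeff_mul_monomial]; simpa using hm)
  · intro h m hm
    rw [coeff_mul_monomial'] at hm
    split_ifs at hm with hv
    · obtain ⟨u, hu, hle⟩ := h (m - v) (by simpa using hm)
      refine ⟨u, hu, ?_⟩
      rwa [tsub_add_cancel_of_le hv] at hle
    · simp at hm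

lemma genByVars_iff {σ : Type*} (A : Set (σ →₀ ℕ)) (v : σ →₀ ℕ) :
    GenByVars K ((Ideal.span (mon K '' A)).colon (Ideal.span {mon K v})) ↔ Good A v := by
  classical
  constructor
  · rintro ⟨B, hB⟩ u hu
    have h1 : (mon K (u - v)) ∈ (Ideal.span (mon K '' A)).colon (Ideal.span {mon K v}) := by
      rw [mem_colon_mon]
      intro m hm
      simp only [mon, support_monomial, one_ne_zero, if_false, Finset.mem_singleton] at hm
      subst hm
      exact ⟨u, hu, le_tsub_add⟩
    rw [hB] at h1
    have h2 := mem_ideal_span_X_image.1 h1 (u - v) (by simp [mon, support_monomial])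
    obtain ⟨i, hi, hne⟩ := h2
    have h3 : (X i : MvPolynomial σ K) ∈
        (Ideal.span (mon K '' A)).colon (Ideal.span {mon K v}) := by
      rw [hB]
      exact Ideal.subset_span ⟨i, hi, rfl⟩
    rw [mem_colon_mon] at h3
    obtain ⟨w, hw, hle⟩ := h3 (Finsupp.single i 1) (by simp [support_X])
    refine ⟨w, hw, i, ?_, by rwa [add_comm]⟩
    simp only [Finsupp.tsub_apply] at hne
    omega
  · intro h
    refine ⟨{l | ∃ w ∈ A, w ≤ v + Finsupp.single l 1}, ?_⟩
    ext f
    rw [mem_colon_mon, mem_ideal_span_X_image]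
    refine forall₂_congr fun m hm => ?_
    constructor
    · rintro ⟨u, hu, hle⟩
      obtain ⟨w, hw, l, hl, hwl⟩ := h u hu
      refine ⟨l, ⟨w, hw, hwl⟩, ?_⟩
      have := hle l
      simp only [Finsupp.add_apply] at this
      omega
    · rintro ⟨l, ⟨w, hw, hwl⟩, hne⟩
      refine ⟨w, hw, hwl.trans ?_⟩
      rw [add_comm]
      gcongr
      rw [Finsupp.single_le_iff]
      omega

lemma lchain_iff {σ : Type*} (A : Set (σ →₀ ℕ)) (L : List (σ →₀ ℕ)) :
    LChain A L ↔ ∀ (j : ℕ) (hj : j < L.length), Good (A ∪ {m | m ∈ L.take j}) (L.get ⟨j, hj⟩) := by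
  induction L generalizing A with
  | nil => simp [LChain]
  | cons v L ih =>
    simp only [LChain, ih]
    constructor
    · rintro ⟨h0, h⟩ j hj
      cases j with
      | zero => simpa using h0
      | succ j =>
        have := h j (by simpa using hj)
        have e : A ∪ {m | m ∈ (v :: L).take (j + 1)} = A ∪ {v} ∪ {m | m ∈ L.take j} := by
          ext m; simp; tauto
        rw [e]
        exact this
    · intro h
      refine ⟨by simpa using h 0 (by simp), fun j hj => ?_⟩
      have := h (j + 1) (by simpa using hj)
      have e : A ∪ {m | m ∈ (v :: L).take (j + 1)} = A ∪ {v} ∪ {m | m ∈ L.take j} := by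
        ext m; simp; tauto
      rw [e] at this
      exact this

lemma lchain_append {σ : Type*} (A : Set (σ →₀ ℕ)) (L M : List (σ →₀ ℕ)) :
    LChain A (L ++ M) ↔ LChain A L ∧ LChain (A ∪ {m | m ∈ L}) M := by
  induction L generalizing A with
  | nil => simp [LChain]
  | cons v L ih =>
    have e : A ∪ {m | m ∈ v :: L} = A ∪ {v} ∪ {m | m ∈ L} := by
      ext m; simp; tauto
    simp only [List.cons_append, LChain, ih, e, and_assoc]

lemma Good.not_mem {σ : Type*} {A : Set (σ →₀ ℕ)} {v : σ →₀ ℕ} (h : Good A v) : v ∉ A := by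
  intro hv
  obtain ⟨w, _, l, hl, _⟩ := h v hv
  exact lt_irrefl _ hl

lemma LChain.nodup {σ : Type*} {A : Set (σ →₀ ℕ)} {L : List (σ →₀ ℕ)} (h : LChain A L) :
    L.Nodup ∧ ∀ m ∈ L, m ∉ A := by
  induction L generalizing A with
  | nil => simp
  | cons v L ih =>
    obtain ⟨h0, h1⟩ := h
    obtain ⟨h2, h3⟩ := ih h1
    refine ⟨List.nodup_cons.2 ⟨fun hv => h3 v hv (by simp), h2⟩, ?_⟩
    intro m hm
    rcases List.mem_cons.1 hm with rfl | hm
    · exact h0.not_mem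
    · exact fun hA => h3 m hm (Or.inl hA)

lemma minimalGens_unique {σ : Type*} [DecidableEq σ] {I : Ideal (MvPolynomial σ K)}
    {U V : Finset (σ →₀ ℕ)} (hU : MinimalGens K I U) (hV : MinimalGens K I V) : U ⊆ V := by
  intro m hm
  have h1 : mon K m ∈ Ideal.span (mon K '' (U : Set (σ →₀ ℕ))) :=
    (mon_mem_span K _ _).2 ⟨m, hm, le_rfl⟩
  rw [← hU.1, hV.1, mon_mem_span] at h1
  obtain ⟨s, hs, hsm⟩ := h1
  have h2 : mon K s ∈ Ideal.span (mon K '' (V : Set (σ →₀ ℕ))) :=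
    (mon_mem_span K _ _).2 ⟨s, hs, le_rfl⟩
  rw [← hV.1, hU.1, mon_mem_span] at h2
  obtain ⟨t, ht, hts⟩ := h2
  have htm : t = m := by
    by_contra hne
    refine hU.2 m hm ((mon_mem_span K _ _).2 ⟨t, ?_, hts.trans hsm⟩)
    simp only [Finset.coe_erase]
    exact ⟨ht, hne⟩
  subst htm
  rwa [le_antisymm hts hsm]

lemma eq_of_le_of_mdeg {σ : Type*} {s m : σ →₀ ℕ} (h : s ≤ m) (hd : mdeg s = mdeg m) : s = m := by
  have h1 : m = s + (m - s) := (add_tsub_cancel_of_le h).symm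
  have h2 : mdeg m = mdeg s + mdeg (m - s) := by
    conv_lhs => rw [h1]
    exact Finsupp.sum_add_index' (fun _ => rfl) (fun _ _ _ => rfl)
  have h3 : (m - s).degree = 0 := by
    change mdeg (m - s) = 0
    omega
  rw [Finsupp.degree_eq_zero_iff] at h3
  rw [h3, add_zero] at h1
  exact h1.symm

lemma minimalGens_of_mdeg {σ : Type*} [DecidableEq σ] {d : ℕ} {U : Finset (σ →₀ ℕ)}
    (h : ∀ m ∈ U, mdeg m = d) :
    MinimalGens K (Ideal.span (mon K '' (U : Set (σ →₀ ℕ)))) U := by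
  refine ⟨rfl, fun m hm hs => ?_⟩
  rw [mon_mem_span] at hs
  obtain ⟨s, hs, hsm⟩ := hs
  simp only [Finset.coe_erase] at hs
  exact hs.2 (eq_of_le_of_mdeg hsm ((h s hs.1).trans (h m hm).symm))

lemma hasLQ_iff {σ : Type*} [DecidableEq σ] {I : Ideal (MvPolynomial σ K)}
    {U : Finset (σ →₀ ℕ)} (hU : MinimalGens K I U) :
    HasLinearQuotients K I ↔ ∃ L, {m | m ∈ L} = (U : Set (σ →₀ ℕ)) ∧ LChain ∅ L := by
  constructor
  · rintro ⟨L, hnd, hL, h⟩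
    have e : L.toFinset = U :=
      Finset.Subset.antisymm (minimalGens_unique K hL hU) (minimalGens_unique K hU hL)
    refine ⟨L, by rw [← e]; ext; simp, (lchain_iff _ _).2 fun j hj => ?_⟩
    rcases Nat.eq_zero_or_pos j with rfl | hj0
    · intro u hu
      simp at hu
    · have := (genByVars_iff K _ _).1 (h j hj hj0)
      simpa using this
  · rintro ⟨L, hL, h⟩
    have e : L.toFinset = U := by
      ext m
      have := Set.ext_iff.1 hL m
      simpa using this
    refine ⟨L, h.nodup.1, by rwa [e], fun j hj _ => ?_⟩
    rw [genByVars_iff]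
    simpa using (lchain_iff _ _).1 h j hj

lemma extends_iff {σ : Type*} [DecidableEq σ] {I : Ideal (MvPolynomial σ K)}
    {U : Finset (σ →₀ ℕ)} (hU : MinimalGens K I U) (V : Set (σ →₀ ℕ)) :
    ExtendsByLinQuots K I V ↔ ∃ L, {m | m ∈ L} = V ∧ LChain (U : Set (σ →₀ ℕ)) L := by
  have key : ∀ (L : List (σ →₀ ℕ)) (j : ℕ), I ⊔ Ideal.span (mon K '' {m | m ∈ L.take j}) =
      Ideal.span (mon K '' ((U : Set (σ →₀ ℕ)) ∪ {m | m ∈ L.take j})) := by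
    intro L j
    rw [hU.1, Set.image_union, Ideal.span_union]
  constructor
  · rintro ⟨L, hnd, hL, h⟩
    refine ⟨L, hL, (lchain_iff _ _).2 fun j hj => ?_⟩
    have := h j hj
    rwa [key, genByVars_iff] at this
  · rintro ⟨L, hL, h⟩
    refine ⟨L, h.nodup.1, hL, fun j hj => ?_⟩
    rw [key, genByVars_iff]
    exact (lchain_iff _ _).1 h j hj

/-! ### Monomial Simon implies Simon -/

lemma lchain_restrict {σ : Type*} (P : (σ →₀ ℕ) → Prop) [DecidablePred P]
    (D : Set (σ →₀ ℕ))
    (hP : ∀ A ⊆ D, ∀ v ∈ D, P v → Good A v → Good (A ∩ {m | P m}) v)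
    (A : Set (σ →₀ ℕ)) (L : List (σ →₀ ℕ)) (hA : A ⊆ D) (hL : ∀ m ∈ L, m ∈ D)
    (h : LChain A L) : LChain (A ∩ {m | P m}) (L.filter P) := by
  induction L generalizing A with
  | nil => trivial
  | cons v L ih =>
    have hv : v ∈ D := hL v (by simp)
    have h2 := ih (A ∪ {v}) (Set.union_subset hA (by simpa using hv))
      (fun m hm => hL m (by simp [hm])) h.2
    by_cases hPv : P v
    · rw [List.filter_cons_of_pos (by simpa using hPv)]
      refine ⟨hP A hA v hv hPv h.1, ?_⟩
      have e : A ∩ {m | P m} ∪ {v} = (A ∪ {v}) ∩ {m | P m} := by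
        ext m
        simp only [Set.mem_union, Set.mem_inter_iff, Set.mem_setOf_eq, Set.mem_singleton_iff]
        constructor
        · rintro (h | rfl)
          · tauto
          · tauto
        · tauto
      rw [e]
      exact h2
    · rw [List.filter_cons_of_neg (by simpa using hPv)]
      have e : A ∩ {m | P m} = (A ∪ {v}) ∩ {m | P m} := by
        ext m
        simp only [Set.mem_union, Set.mem_inter_iff, Set.mem_setOf_eq, Set.mem_singleton_iff]
        constructor
        · tauto
        · rintro ⟨h | rfl, h'⟩
          · tauto
          · tauto
      rw [e]
      exact h2

lemma good_sqfree {σ : Type*} {A : Set (σ →₀ ℕ)} {v : σ →₀ ℕ} (hv : ∀ i, v i ≤ 1)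
    (hA : ∀ u ∈ A, ∀ i, u i ≤ 1) {B : Set (σ →₀ ℕ)} (hAB : A = B ∩ {m | ∀ i, m i ≤ 1})
    (h : Good B v) : Good A v := by
  classical
  intro u hu
  have hu' := hu
  rw [hAB] at hu'
  obtain ⟨w, hw, l, hl, hwl⟩ := h u hu'.1
  refine ⟨w, ?_, l, hl, hwl⟩
  rw [hAB]
  refine ⟨hw, fun i => ?_⟩
  have h1 := hwl i
  have h2 := hu'.2 l
  have h3 := hv i
  simp only [Finsupp.add_apply, Finsupp.single_apply] at h1
  split_ifs at h1 with hli
  · subst hli; omega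
  · omega

/-! ### Simon implies monomial Simon -/

section Depol

variable {σ τ : Type*} (π : σ → τ)

/-- Lifting of divisors along a map of variables. -/
lemma lift_under (M : σ →₀ ℕ) : ∀ w : τ →₀ ℕ, w ≤ M.mapDomain π →
    ∃ W ≤ M, W.mapDomain π = w := by
  classical
  induction M using Finsupp.induction with
  | zero =>
    intro w hw
    refine ⟨0, le_rfl, ?_⟩
    simp only [Finsupp.mapDomain_zero] at hw ⊢
    exact (le_antisymm hw (zero_le)).symm
  | single_add a k M _ _ ih =>
    intro w hw
    rw [Finsupp.mapDomain_add, Finsupp.mapDomain_single] at hw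
    obtain ⟨W, hW, hW'⟩ := ih (w - Finsupp.single (π a) k) (tsub_le_iff_left.2 hw)
    refine ⟨Finsupp.single a (min (w (π a)) k) + W,
      add_le_add (Finsupp.single_mono (min_le_right _ _)) hW, ?_⟩
    rw [Finsupp.mapDomain_add, Finsupp.mapDomain_single, hW']
    ext i
    simp only [Finsupp.add_apply, Finsupp.tsub_apply, Finsupp.single_apply]
    split_ifs with h
    · subst h; omega
    · omega

lemma mdeg_mapDomain (M : σ →₀ ℕ) : mdeg (M.mapDomain π) = mdeg M :=
  Finsupp.sum_mapDomain_index (fun _ => rfl) (fun _ _ _ => rfl)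

lemma mapDomain_eq_sum [Fintype σ] [DecidableEq τ] (M : σ →₀ ℕ) (l : τ) :
    M.mapDomain π l = ∑ x with π x = l, M x := by
  classical
  rw [Finsupp.mapDomain, Finsupp.sum_fintype _ _ (by simp), Finsupp.finsetSum_apply,
    Finset.sum_filter]
  simp [Finsupp.single_apply]

lemma exists_lt_of_mapDomain_lt [Fintype σ] {M N : σ →₀ ℕ} {l : τ}
    (h : M.mapDomain π l < N.mapDomain π l) : ∃ x, π x = l ∧ M x < N x := by
  classical
  rw [mapDomain_eq_sum, mapDomain_eq_sum] at h
  obtain ⟨x, hx, hlt⟩ := Finset.exists_lt_of_sum_lt h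
  exact ⟨x, by simpa using hx, hlt⟩

/-- Squarefree monomials lying over a set of monomials. -/
def Pre (A : Set (τ →₀ ℕ)) : Set (σ →₀ ℕ) := {M | (∀ x, M x ≤ 1) ∧ M.mapDomain π ∈ A}

lemma pre_union (A B : Set (τ →₀ ℕ)) : Pre π (A ∪ B) = Pre π A ∪ Pre π B := by
  ext M; simp [Pre]; tauto

lemma finite_sqfree [Fintype σ] : {M : σ →₀ ℕ | ∀ x, M x ≤ 1}.Finite := by
  classical
  refine (Set.finite_Icc 0 (Finsupp.equivFunOnFinite.symm fun _ : σ => 1)).subset ?_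
  intro M hM
  exact ⟨zero_le, fun x => by simpa using hM x⟩

/-- elements earlier in the ordering coming from `Good A v` -/
lemma good_pre [Fintype σ] {A : Set (τ →₀ ℕ)} {V : σ →₀ ℕ} (hV : ∀ x, V x ≤ 1)
    (h : Good A (V.mapDomain π)) : Good (Pre π A) V := by
  classical
  rintro U ⟨hU, hUA⟩
  obtain ⟨w, hw, l, hl, hwl⟩ := h _ hUA
  obtain ⟨x, rfl, hx⟩ := exists_lt_of_mapDomain_lt π hl
  have e : (V + Finsupp.single x 1).mapDomain π =
      V.mapDomain π + Finsupp.single (π x) 1 := by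
    rw [Finsupp.mapDomain_add, Finsupp.mapDomain_single]
  rw [← e] at hwl
  obtain ⟨W, hW, rfl⟩ := lift_under π _ _ hwl
  refine ⟨W, ⟨fun y => ?_, hw⟩, x, hx, hW⟩
  have h1 := hW y
  have h2 := hU x
  have h3 := hV y
  simp only [Finsupp.add_apply, Finsupp.single_apply] at h1
  split_ifs at h1 with hxy
  · subst hxy; omega
  · omega

/-- elements earlier in the lexicographic order of the fibre -/
lemma fibre_lex [Fintype σ] [LinearOrder σ] {U V : σ →₀ ℕ} (hU : ∀ x, U x ≤ 1)
    (hV : ∀ x, V x ≤ 1) (he : U.mapDomain π = V.mapDomain π) (hlt : toLex V < toLex U) :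
    ∃ W : σ →₀ ℕ, (∀ x, W x ≤ 1) ∧ W.mapDomain π = V.mapDomain π ∧ toLex V < toLex W ∧
      ∃ x, V x < U x ∧ W ≤ V + Finsupp.single x 1 := by
  classical
  rw [Finsupp.Lex.lt_iff] at hlt
  obtain ⟨x, hlow, hx⟩ := hlt
  simp only [ofLex_toLex] at hlow hx
  have hy : ∃ y, π y = π x ∧ U y < V y := by
    by_contra hcon
    push Not at hcon
    have hs : V.mapDomain π (π x) < U.mapDomain π (π x) := by
      rw [mapDomain_eq_sum, mapDomain_eq_sum]
      refine Finset.sum_lt_sum (fun y hy => hcon y (by simpa using hy)) ⟨x, by simp, hx⟩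
    rw [he] at hs
    exact lt_irrefl _ hs
  obtain ⟨y, hyx, hy⟩ := hy
  have hxy : x < y := by
    rcases lt_trichotomy x y with h | h | h
    · exact h
    · subst h; omega
    · have := hlow y h; omega
  have hle : Finsupp.single y 1 ≤ V := by
    rw [Finsupp.single_le_iff]; omega
  refine ⟨V - Finsupp.single y 1 + Finsupp.single x 1, ?_, ?_, ?_, x, hx, ?_⟩
  · intro z
    have h1 := hU x
    have h3 := hV z
    simp only [Finsupp.add_apply, Finsupp.tsub_apply]
    rw [Finsupp.single_apply (a := x)]
    split_ifs with hz
    · subst hz; omega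
    · omega
  · have : V.mapDomain π = (V - Finsupp.single y 1).mapDomain π + Finsupp.single (π y) 1 := by
      conv_lhs => rw [← tsub_add_cancel_of_le hle]
      rw [Finsupp.mapDomain_add, Finsupp.mapDomain_single]
    rw [Finsupp.mapDomain_add, Finsupp.mapDomain_single, this, hyx]
  · rw [Finsupp.Lex.lt_iff]
    refine ⟨x, fun z hz => ?_, ?_⟩
    · simp [Finsupp.single_apply, hz.ne', (hz.trans hxy).ne']
    · simp [Finsupp.single_apply, hxy.ne']
  · gcongr
    exact tsub_le_self

lemma lchain_fibre [Fintype σ] [LinearOrder σ] {A : Set (τ →₀ ℕ)} {v : τ →₀ ℕ} (h : Good A v) :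
    ∃ L, {m | m ∈ L} = Pre π {v} ∧ LChain (Pre π A) L := by
  classical
  have hfin : (Pre π {v}).Finite := finite_sqfree.subset fun M hM => hM.1
  have main : ∀ F : Finset (σ →₀ ℕ), (∀ M ∈ F, M ∈ Pre π {v}) →
      (∀ M ∈ F, ∀ N ∈ Pre π {v}, toLex M < toLex N → N ∈ F) →
      ∃ L, {m | m ∈ L} = (F : Set (σ →₀ ℕ)) ∧ LChain (Pre π A) L := by
    intro F
    induction F using Finset.induction_on_min_value (fun M : σ →₀ ℕ => toLex M) with
    | empty => exact fun _ _ => ⟨[], by simp, trivial⟩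
    | insert V s hVs hmin ih =>
      intro hF hup
      have hlt : ∀ M ∈ s, toLex V < toLex M := fun M hM =>
        lt_of_le_of_ne (hmin M hM) fun e => hVs (by
          have : V = M := toLex.injective e
          rwa [this])
      obtain ⟨L, hL, hc⟩ := ih (fun M hM => hF M (Finset.mem_insert_of_mem hM)) (by
        intro M hM N hN hMN
        rcases Finset.mem_insert.1 (hup M (Finset.mem_insert_of_mem hM) N hN hMN) with rfl | h
        · exact absurd ((hlt M hM).trans hMN) (lt_irrefl _)
        · exact h)
      refine ⟨L ++ [V], ?_, (lchain_append _ _ _).2 ⟨hc, ?_, trivial⟩⟩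
      · ext m
        have := Set.ext_iff.1 hL m
        simp only [Set.mem_setOf_eq, Finset.mem_coe] at this
        simp [this, or_comm]
      · rw [hL]
        have hV := hF V (Finset.mem_insert_self _ _)
        have hVv : V.mapDomain π = v := hV.2
        rintro U (hU | hU)
        · obtain ⟨w, hw, hh⟩ := good_pre π hV.1 (by rw [hVv]; exact h) U hU
          exact ⟨w, Or.inl hw, hh⟩
        · have hUv := hF U (Finset.mem_insert_of_mem hU)
          have hUv' : U.mapDomain π = v := hUv.2
          obtain ⟨W, hW1, hW2, hW3, x, hx, hWx⟩ :=
            fibre_lex π hUv.1 hV.1 (by rw [hUv', hVv]) (hlt U hU)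
          refine ⟨W, Or.inr ?_, x, hx, hWx⟩
          have := hup V (Finset.mem_insert_self _ _) W ⟨hW1, by rw [hW2, hVv]; rfl⟩ hW3
          rcases Finset.mem_insert.1 this with rfl | h
          · exact absurd hW3 (lt_irrefl _)
          · exact h
  obtain ⟨L, hL, hc⟩ := main hfin.toFinset (by simp) (by
    intro M hM N hN _
    simpa using hN)
  exact ⟨L, by rw [hL]; simp, hc⟩

lemma lchain_pre [Fintype σ] [LinearOrder σ] (A : Set (τ →₀ ℕ)) (L : List (τ →₀ ℕ))
    (h : LChain A L) : ∃ L', {m | m ∈ L'} = Pre π {m | m ∈ L} ∧ LChain (Pre π A) L' := by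
  induction L generalizing A with
  | nil => exact ⟨[], by ext; simp [Pre], trivial⟩
  | cons v L ih =>
    obtain ⟨L1, h1, c1⟩ := lchain_fibre π h.1
    obtain ⟨L2, h2, c2⟩ := ih _ h.2
    refine ⟨L1 ++ L2, ?_, (lchain_append _ _ _).2 ⟨c1, ?_⟩⟩
    · have e : {m | m ∈ v :: L} = {v} ∪ {m | m ∈ L} := by ext m; simp
      rw [e, pre_union, ← h1, ← h2]
      ext m; simp
    · rw [h1, ← pre_union]
      exact c2

/-- Descent of `Good` from the squarefree monomials to all monomials. -/
lemma good_descend [Fintype σ] {U : Set (τ →₀ ℕ)} {V : σ →₀ ℕ} (hV : ∀ x, V x ≤ 1)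
    (hU : ∀ u ∈ U, u ≤ (Finsupp.equivFunOnFinite.symm fun _ : σ => 1).mapDomain π)
    (h : Good (Pre π U) V) : Good U (V.mapDomain π) := by
  classical
  intro u hu
  set one : σ →₀ ℕ := Finsupp.equivFunOnFinite.symm fun _ : σ => 1 with hone
  have hone' : ∀ x, one x = 1 := fun x => by simp [hone]
  set v := V.mapDomain π with hv
  obtain ⟨W0, hW0, hW0'⟩ := lift_under π V (u ⊓ v) (inf_le_right)
  have hW1 : W0 ≤ one := fun x => by
    have := hW0 x
    have := hV x
    rw [hone']; omega
  have e1 : one.mapDomain π = W0.mapDomain π + (one - W0).mapDomain π := by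
    rw [← Finsupp.mapDomain_add, add_tsub_cancel_of_le hW1]
  obtain ⟨E, hE, hE'⟩ := lift_under π (one - W0) (u - u ⊓ v) (by
    rw [tsub_le_iff_left, ← hW0', ← e1]
    exact hU u hu)
  have hU' : (W0 + E) ∈ Pre π U := by
    refine ⟨fun x => ?_, ?_⟩
    · have h1 := hE x
      have h2 := hW1 x
      simp only [Finsupp.tsub_apply, Finsupp.add_apply, hone'] at *
      omega
    · rw [Finsupp.mapDomain_add, hW0', hE', add_tsub_cancel_of_le inf_le_left]
      exact hu
  obtain ⟨W, hW, x, hx, hWx⟩ := h _ hU'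
  refine ⟨W.mapDomain π, hW.2, π x, ?_, ?_⟩
  · by_contra hcon
    push Not at hcon
    have h0 : E.mapDomain π (π x) = 0 := by
      rw [hE']
      simp only [Finsupp.tsub_apply, Finsupp.inf_apply]
      rw [inf_eq_left.2 hcon]
      omega
    rw [mapDomain_eq_sum, Finset.sum_eq_zero_iff] at h0
    have h1 := h0 x (by simp)
    have h2 := hW0 x
    simp only [Finsupp.add_apply] at hx
    omega
  · have := Finsupp.mapDomain_mono (f := π) hWx
    rwa [Finsupp.mapDomain_add, Finsupp.mapDomain_single] at this

end Depol

lemma le_mdeg {σ : Type*} (m : σ →₀ ℕ) (i : σ) : m i ≤ mdeg m :=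
  Finsupp.le_degree i m

lemma finite_mdeg (n d : ℕ) : {m : Fin n →₀ ℕ | mdeg m = d}.Finite := by
  classical
  refine (Set.finite_Icc 0 (Finsupp.equivFunOnFinite.symm fun _ : Fin n => d)).subset ?_
  intro M hM
  refine ⟨zero_le, fun x => ?_⟩
  have h : mdeg M = d := hM
  simpa [← h] using le_mdeg M x

/-- The projection from the doubly indexed variables. -/
def proj (n d : ℕ) (x : Fin (n * d)) : Fin n := (finProdFinEquiv.symm x).1

lemma mapDomain_one (n d : ℕ) (i : Fin n) :
    (Finsupp.equivFunOnFinite.symm fun _ : Fin (n * d) => 1).mapDomain (proj n d) i = d := by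
  classical
  rw [mapDomain_eq_sum, Finset.sum_filter]
  rw [← finProdFinEquiv.sum_comp, Fintype.sum_prod_type]
  simp [proj]

/-- Combinatorial form of Simon's conjecture. -/
def CombSimon : Prop := ∀ (n d : ℕ) (U : Finset (Fin n →₀ ℕ)),
  (∀ m ∈ U, (∀ i, m i ≤ 1) ∧ mdeg m = d) →
  (∃ L, {m | m ∈ L} = (U : Set (Fin n →₀ ℕ)) ∧ LChain ∅ L) →
  ∃ L, {m | m ∈ L} = {m : Fin n →₀ ℕ | (∀ i, m i ≤ 1) ∧ mdeg m = d} \ (U : Set (Fin n →₀ ℕ)) ∧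
    LChain (U : Set (Fin n →₀ ℕ)) L

/-- Combinatorial form of the monomial Simon conjecture. -/
def CombMonSimon : Prop := ∀ (n d : ℕ) (U : Finset (Fin n →₀ ℕ)),
  (∀ m ∈ U, mdeg m = d) →
  (∃ L, {m | m ∈ L} = (U : Set (Fin n →₀ ℕ)) ∧ LChain ∅ L) →
  ∃ L, {m | m ∈ L} = {m : Fin n →₀ ℕ | mdeg m = d} \ (U : Set (Fin n →₀ ℕ)) ∧
    LChain (U : Set (Fin n →₀ ℕ)) L

lemma one_step (hS : CombSimon) (n d : ℕ) (U : Finset (Fin n →₀ ℕ))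
    (hU : ∀ m ∈ U, mdeg m = d) (hLQ : ∃ L, {m | m ∈ L} = (U : Set (Fin n →₀ ℕ)) ∧ LChain ∅ L)
    (v0 : Fin n →₀ ℕ) (hv0 : mdeg v0 = d) (hv0U : v0 ∉ U) :
    ∃ v, mdeg v = d ∧ v ∉ U ∧ Good (U : Set (Fin n →₀ ℕ)) v := by
  classical
  have hle : ∀ u : Fin n →₀ ℕ, mdeg u = d →
      u ≤ (Finsupp.equivFunOnFinite.symm fun _ : Fin (n * d) => 1).mapDomain (proj n d) := by
    intro u hu i
    rw [mapDomain_one]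
    exact (le_mdeg u i).trans hu.le
  have hfin : (Pre (proj n d) (U : Set (Fin n →₀ ℕ))).Finite :=
    finite_sqfree.subset fun M hM => hM.1
  obtain ⟨L, hL, hc⟩ := hLQ
  obtain ⟨L', hL', hc'⟩ := lchain_pre (proj n d) _ _ hc
  obtain ⟨M, hM, hMc⟩ := hS (n * d) d hfin.toFinset (by
      intro m hm
      rw [Set.Finite.mem_toFinset] at hm
      exact ⟨hm.1, by rw [← mdeg_mapDomain (proj n d)]; exact hU _ hm.2⟩)
    ⟨L', by rw [hL', hL]; simp, by
      have e : Pre (proj n d) (∅ : Set (Fin n →₀ ℕ)) = ∅ := by ext; simp [Pre]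
      rwa [e] at hc'⟩
  rw [Set.Finite.coe_toFinset] at hM hMc
  obtain ⟨V0, hV0, hV0'⟩ := lift_under (proj n d) _ v0 (hle v0 hv0)
  have hV0M : V0 ∈ {m | m ∈ M} := by
    rw [hM]
    refine ⟨⟨fun i => by simpa using hV0 i, ?_⟩, fun h => hv0U ?_⟩
    · rw [← mdeg_mapDomain (proj n d), hV0', hv0]
    · have := h.2
      rwa [hV0'] at this
  cases M with
  | nil => simp at hV0M
  | cons V M =>
    have hV : V ∈ {m | m ∈ V :: M} := by simp
    rw [hM] at hV
    have hg : Good (U : Set (Fin n →₀ ℕ)) (V.mapDomain (proj n d)) :=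
      good_descend (proj n d) hV.1.1 (fun u hu => hle u (hU u hu)) hMc.1
    exact ⟨_, by rw [mdeg_mapDomain]; exact hV.1.2, hg.not_mem, hg⟩

lemma combMonSimon_of_combSimon (hS : CombSimon) : CombMonSimon := by
  classical
  intro n d
  have main : ∀ (k : ℕ) (U : Finset (Fin n →₀ ℕ)),
      ((finite_mdeg n d).toFinset \ U).card = k → (∀ m ∈ U, mdeg m = d) →
      (∃ L, {m | m ∈ L} = (U : Set (Fin n →₀ ℕ)) ∧ LChain ∅ L) →
      ∃ L, {m | m ∈ L} = {m : Fin n →₀ ℕ | mdeg m = d} \ (U : Set (Fin n →₀ ℕ)) ∧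
        LChain (U : Set (Fin n →₀ ℕ)) L := by
    intro k
    induction k with
    | zero =>
      intro U hk hU hLQ
      refine ⟨[], ?_, trivial⟩
      rw [Finset.card_eq_zero, Finset.sdiff_eq_empty_iff_subset] at hk
      symm
      simp only [List.not_mem_nil, Set.setOf_false]
      rw [Set.diff_eq_empty]
      intro m hm
      exact hk (by simpa using hm)
    | succ k ih =>
      intro U hk hU hLQ
      have hne : ((finite_mdeg n d).toFinset \ U).Nonempty := by
        rw [← Finset.card_pos]; omega
      obtain ⟨v0, hv0⟩ := hne
      rw [Finset.mem_sdiff, Set.Finite.mem_toFinset] at hv0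
      obtain ⟨v, hvd, hvU, hg⟩ := one_step hS n d U hU hLQ v0 hv0.1 hv0.2
      obtain ⟨L, hL, hc⟩ := hLQ
      have hvm : v ∈ (finite_mdeg n d).toFinset \ U := by
        rw [Finset.mem_sdiff, Set.Finite.mem_toFinset]
        exact ⟨hvd, hvU⟩
      have e : ((insert v U : Finset (Fin n →₀ ℕ)) : Set (Fin n →₀ ℕ)) = ↑U ∪ {v} := by
        ext m; simp [or_comm]
      obtain ⟨M, hM, hMc⟩ := ih (insert v U) (by
          rw [Finset.sdiff_insert, Finset.card_erase_of_mem hvm, hk]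
          rfl) (by
          intro m hm
          rcases Finset.mem_insert.1 hm with rfl | hm
          · exact hvd
          · exact hU m hm)
        ⟨L ++ [v], by
          rw [e, ← hL]
          ext m; simp [or_comm], (lchain_append _ _ _).2 ⟨hc, by
            rw [hL, Set.empty_union]
            exact ⟨hg, trivial⟩⟩⟩
      rw [e] at hM hMc
      refine ⟨v :: M, ?_, hg, hMc⟩
      ext m
      have := Set.ext_iff.1 hM m
      simp only [Set.mem_setOf_eq, Set.mem_diff, Set.mem_union, Set.mem_singleton_iff,
        Finset.mem_coe, List.mem_cons] at this ⊢
      rw [this]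
      by_cases hmv : m = v
      · subst hmv; simp [hvd, hvU]
      · simp [hmv]
  intro U hU hLQ
  exact main _ U rfl hU hLQ

lemma combSimon_of_combMonSimon (hS : CombMonSimon) : CombSimon := by
  classical
  intro n d U hU hLQ
  obtain ⟨L, hL, hc⟩ := hS n d U (fun m hm => (hU m hm).2) hLQ
  have e : (U : Set (Fin n →₀ ℕ)) = ↑U ∩ {m | ∀ i, m i ≤ 1} := by
    ext m
    simp only [Set.mem_inter_iff, Finset.mem_coe, Set.mem_setOf_eq]
    exact ⟨fun h => ⟨h, (hU m h).1⟩, fun h => h.1⟩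
  refine ⟨L.filter (fun m => ∀ i, m i ≤ 1), ?_, ?_⟩
  · ext m
    have := Set.ext_iff.1 hL m
    simp only [Set.mem_setOf_eq, Set.mem_diff, Finset.mem_coe] at this
    simp [this]
    tauto
  · rw [e]
    exact lchain_restrict (fun m : Fin n →₀ ℕ => ∀ i, m i ≤ 1) Set.univ
      (fun A _ v _ hv hg => good_sqfree hv (fun u hu => hu.2) rfl hg) _ _
      (Set.subset_univ _) (fun _ _ => Set.mem_univ _) hc

/-- Simon's conjecture (every equigenerated squarefree monomial ideal with linear quotients
extends to the squarefree Veronese ideal `I_{n,d}` by linear quotients) is equivalent to the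
monomial Simon conjecture (every equigenerated monomial ideal with linear quotients extends
to `m^d` by linear quotients). -/
theorem stmt5 :
    (∀ (n d : ℕ) (I : Ideal (MvPolynomial (Fin n) K)) (U : Finset (Fin n →₀ ℕ)),
      MinimalGens K I U →
      (∀ m ∈ U, (∀ i, m i ≤ 1) ∧ mdeg m = d) →
      HasLinearQuotients K I →
      ExtendsByLinQuots K I
        ({m : Fin n →₀ ℕ | (∀ i, m i ≤ 1) ∧ mdeg m = d} \ (U : Set (Fin n →₀ ℕ)))) ↔
    (∀ (n d : ℕ) (I : Ideal (MvPolynomial (Fin n) K)) (U : Finset (Fin n →₀ ℕ)),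
      MinimalGens K I U →
      (∀ m ∈ U, mdeg m = d) →
      HasLinearQuotients K I →
      ExtendsByLinQuots K I
        ({m : Fin n →₀ ℕ | mdeg m = d} \ (U : Set (Fin n →₀ ℕ)))) := by
  classical
  constructor
  · intro h
    have hS : CombSimon := by
      intro n d U hU hLQ
      have hm := minimalGens_of_mdeg K fun m hm => (hU m hm).2
      exact (extends_iff K hm _).1 (h n d _ U hm hU ((hasLQ_iff K hm).2 hLQ))
    intro n d I U hm hU hLQ
    exact (extends_iff K hm _).2
      (combMonSimon_of_combSimon hS n d U hU ((hasLQ_iff K hm).1 hLQ))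
  · intro h
    have hS : CombMonSimon := by
      intro n d U hU hLQ
      have hm := minimalGens_of_mdeg K hU
      exact (extends_iff K hm _).1 (h n d _ U hm hU ((hasLQ_iff K hm).2 hLQ))
    intro n d I U hm hU hLQ
    exact (extends_iff K hm _).2
      (combSimon_of_combMonSimon hS n d U hU ((hasLQ_iff K hm).1 hLQ))

end
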